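/- arXiv:2209.11948 — 9 statements merged into one kernel-verified Lean document; each statement's English description precedes it below -/
import Mathlib

section
/- For every generalized cube there exists a sign assignment; that is, there exists an 𝔽₂-valued function on the set of edges of the cube such that for every 2-dimensional face (i.e. whenever I₁ ≠ I₂ are both immediate successors of a vertex I and I₁₂ is an immediate successor of both I₁ and I₂) the four values 𝓈(I,I₁) + 𝓈(I,I₂) + 𝓈(I₁,I₁₂) + 𝓈(I₂,I₁₂) sum to 1. -/
/-!
Order `ι` linearly and let the edge from `I` to `I + e_a` have sign `∑_{i < a} I i` modulo `2`
(the standard sign of the Koszul or Khovanov cube). A 2-dimensional face at `I` is spanned by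
`e_a` and `e_b` with `a ≠ b`. In the sum over its four edges the contributions of `I` occur twice
and cancel, and what remains is `[a < b] + [b < a] = 1`.
-/

/-- The generalized cube: functions `I : ι → ℤ` with `lo i ≤ I i ≤ hi i` for all `i`. -/
def Cube {ι : Type*} (lo hi : ι → ℤ) : Set (ι → ℤ) :=
  {I | ∀ i, lo i ≤ I i ∧ I i ≤ hi i}

/-- `I'` is an immediate successor of `I`: exactly one coordinate increases by `1`. -/
def IsSucc {ι : Type*} (I I' : ι → ℤ) : Prop :=
  ∃ j, I' j = I j + 1 ∧ ∀ k, k ≠ j → I' k = I k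

/-- A sign assignment: an `𝔽₂`-valued function on edges of the cube such that the four
values around any 2-dimensional face sum to `1`. -/
def IsSignAssignment {ι : Type*} (lo hi : ι → ℤ)
    (s : (ι → ℤ) → (ι → ℤ) → ZMod 2) : Prop :=
  ∀ I I₁ I₂ I₁₂ : ι → ℤ, I ∈ Cube lo hi → I₁ ∈ Cube lo hi → I₂ ∈ Cube lo hi →
    I₁₂ ∈ Cube lo hi → I₁ ≠ I₂ → IsSucc I I₁ → IsSucc I I₂ → IsSucc I₁ I₁₂ →
    IsSucc I₂ I₁₂ →
    s I I₁ + s I I₂ + s I₁ I₁₂ + s I₂ I₁₂ = 1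

/-- The sign `∑_{i < a} I i` of the edge from `I` to `I + e_a`, written as the bilinear
expression `∑_{i < j} I i * (I' j - I j)` so that it makes sense for every pair `I`, `I'`. -/
def edgeSign {ι : Type*} [Fintype ι] [LinearOrder ι] (I I' : ι → ℤ) : ZMod 2 :=
  ∑ j, (∑ i with i < j, (I i : ZMod 2)) * ((I' j - I j : ℤ) : ZMod 2)

theorem IsSucc.exists_eq_add_single {ι : Type*} [DecidableEq ι] {I I' : ι → ℤ}
    (h : IsSucc I I') : ∃ a, I' = I + Pi.single a 1 := by
  obtain ⟨a, ha, hk⟩ := h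
  refine ⟨a, funext fun k => ?_⟩
  by_cases hka : k = a
  · subst hka
    simp [ha]
  · simp [hk k hka, hka]

theorem edgeSign_add_single {ι : Type*} [Fintype ι] [LinearOrder ι] (I : ι → ℤ) (a : ι) :
    edgeSign I (I + Pi.single a 1) = ∑ i with i < a, (I i : ZMod 2) := by
  simp [edgeSign, Pi.single_apply]

theorem sum_lt_add_single {ι : Type*} [Fintype ι] [LinearOrder ι] (I : ι → ℤ) (a b : ι) :
    ∑ i with i < b, (((I + Pi.single a 1 : ι → ℤ) i : ℤ) : ZMod 2) =
      (∑ i with i < b, (I i : ZMod 2)) + if a < b then 1 else 0 := by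
  simp [Pi.single_apply, Finset.sum_add_distrib]

/-- For every generalized cube there exists a sign assignment. -/
theorem exists_sign_assignment {ι : Type*} [Fintype ι] (lo hi : ι → ℤ)
    (hlohi : ∀ i, lo i ≤ hi i) :
    ∃ s : (ι → ℤ) → (ι → ℤ) → ZMod 2, IsSignAssignment lo hi s := by
  classical
  let e := Fintype.equivFin ι
  let _ : LinearOrder ι := LinearOrder.lift' e e.injective
  refine ⟨edgeSign, fun I I₁ I₂ I₁₂ _ _ _ _ hne h₁ h₂ h₁₂ h₂₁ => ?_⟩
  obtain ⟨a, rfl⟩ := h₁.exists_eq_add_single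
  obtain ⟨b, rfl⟩ := h₂.exists_eq_add_single
  obtain ⟨c, rfl⟩ := h₁₂.exists_eq_add_single
  obtain ⟨d, hd⟩ := h₂₁.exists_eq_add_single
  have hab : a ≠ b := fun h => hne (by rw [h])
  -- `e_a + e_c = e_b + e_d` with `a ≠ b` forces `c = b` and `d = a`: the face is a square.
  have hc : c = b := by
    by_contra hcb
    have h := congrFun hd b
    simp only [Pi.add_apply, Pi.single_apply] at h
    split_ifs at h <;> grind
  have hda : d = a := by
    by_contra hda
    have h := congrFun hd a
    simp only [Pi.add_apply, Pi.single_apply] at h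
    split_ifs at h <;> grind
  subst hc hda
  rw [edgeSign_add_single, edgeSign_add_single, edgeSign_add_single, hd, edgeSign_add_single,
    sum_lt_add_single, sum_lt_add_single]
  have hite : ((if d < c then 1 else 0) + if c < d then 1 else 0 : ZMod 2) = 1 := by
    rcases lt_or_gt_of_ne hab with h | h <;> simp [h, h.asymm]
  linear_combination hite + CharTwo.add_self_eq_zero (∑ i with i < d, (I i : ZMod 2)) +
    CharTwo.add_self_eq_zero (∑ i with i < c, (I i : ZMod 2))
end

section
/- Any two sign assignments 𝓈 and 𝓈' on a generalized cube differ by a coboundary: there exists a 0-cochain 𝓉 : Cube → 𝔽₂ such that 𝓈(I,I') + 𝓈'(I,I') = 𝓉(I) + 𝓉(I') for every edge (I,I') of the cube. -/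
/-- Two distinct immediate predecessors of a vertex form, with their infimum, a 2-dimensional
face. -/
lemma inf_of_isSucc {ι : Type*} {P Q I : ι → ℤ} (hP : IsSucc P I) (hQ : IsSucc Q I)
    (hne : P ≠ Q) : IsSucc (P ⊓ Q) P ∧ IsSucc (P ⊓ Q) Q := by
  obtain ⟨j, hj, hj'⟩ := hP
  obtain ⟨k, hk, hk'⟩ := hQ
  have hjk : j ≠ k := by
    rintro rfl
    apply hne
    funext i
    by_cases h : i = j
    · subst h; omega
    · rw [← hj' i h, ← hk' i h]
  have h₁ := hk' j hjk
  have h₂ := hj' k hjk.symm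
  refine ⟨⟨k, ?_, fun i hi => ?_⟩, ⟨j, ?_, fun i hi => ?_⟩⟩
  · simp only [Pi.inf_apply]; omega
  · have := hk' i hi
    by_cases h : i = j
    · subst h; simp only [Pi.inf_apply]; omega
    · have := hj' i h
      simp only [Pi.inf_apply]; omega
  · simp only [Pi.inf_apply]; omega
  · have := hj' i hi
    by_cases h : i = k
    · subst h; simp only [Pi.inf_apply]; omega
    · have := hk' i h
      simp only [Pi.inf_apply]; omega

lemma inf_mem_cube {ι : Type*} {lo hi P Q : ι → ℤ} (hP : P ∈ Cube lo hi) (hQ : Q ∈ Cube lo hi) :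
    P ⊓ Q ∈ Cube lo hi := fun i =>
  ⟨le_inf (hP i).1 (hQ i).1, inf_le_left.trans (hP i).2⟩

lemma IsSucc.sum_eq {ι : Type*} [Fintype ι] {I I' : ι → ℤ} (h : IsSucc I I') :
    ∑ i, I' i = ∑ i, I i + 1 := by
  classical
  obtain ⟨j, hj, hj'⟩ := h
  rw [← Finset.add_sum_erase _ I' (Finset.mem_univ j),
    ← Finset.add_sum_erase _ I (Finset.mem_univ j), hj,
    Finset.sum_congr rfl fun k hk => hj' k (Finset.ne_of_mem_erase hk)]
  ring

/-- A 1-cocycle on the cube has a potential on the vertices at height at most `n` above the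
bottom vertex `lo`. -/
lemma exists_potential_of_height_le {ι : Type*} [Fintype ι] (lo hi : ι → ℤ)
    (d : (ι → ℤ) → (ι → ℤ) → ZMod 2)
    (hd : ∀ I I₁ I₂ I₁₂ : ι → ℤ, I ∈ Cube lo hi → I₁ ∈ Cube lo hi → I₂ ∈ Cube lo hi →
      I₁₂ ∈ Cube lo hi → I₁ ≠ I₂ → IsSucc I I₁ → IsSucc I I₂ → IsSucc I₁ I₁₂ →
      IsSucc I₂ I₁₂ → d I I₁ + d I I₂ + d I₁ I₁₂ + d I₂ I₁₂ = 0) (n : ℕ) :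
    ∃ t : (ι → ℤ) → ZMod 2, ∀ I I', I ∈ Cube lo hi → I' ∈ Cube lo hi → IsSucc I I' →
      ∑ i, I' i ≤ ∑ i, lo i + n → d I I' = t I + t I' := by
  classical
  induction n with
  | zero =>
    refine ⟨0, fun I I' hI _ h hn => ?_⟩
    have h₁ := h.sum_eq
    have h₂ : ∑ i, lo i ≤ ∑ i, I i := Finset.sum_le_sum fun i _ => (hI i).1
    push_cast at hn
    omega
  | succ n ih =>
    obtain ⟨t, ht⟩ := ih
    refine ⟨fun I => if h : ∑ i, I i = ∑ i, lo i + (n + 1) ∧ ∃ P ∈ Cube lo hi, IsSucc P I then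
      t h.2.choose + d h.2.choose I else t I, fun P I hP hI hPI hn => ?_⟩
    have hsum := hPI.sum_eq
    push_cast at hn
    have hP_low : ¬ (∑ i, P i = ∑ i, lo i + ((n : ℤ) + 1) ∧ ∃ R ∈ Cube lo hi, IsSucc R P) := by
      rintro ⟨h, -⟩
      omega
    simp only [dif_neg hP_low]
    split_ifs with h
    · obtain ⟨hQ, hQI⟩ := h.2.choose_spec
      generalize h.2.choose = Q at hQ hQI
      by_cases hne : P = Q
      · subst hne
        rw [← add_assoc, CharTwo.add_self_eq_zero, zero_add]
      · obtain ⟨hRP, hRQ⟩ := inf_of_isSucc hPI hQI hne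
        have hR := inf_mem_cube hP hQ
        have hsumQ := hQI.sum_eq
        have e₁ := ht _ _ hR hP hRP (by omega)
        have e₂ := ht _ _ hR hQ hRQ (by omega)
        have e := hd _ _ _ _ hR hP hQ hI hne hRP hRQ hPI hQI
        rw [e₁, e₂] at e
        have e₃ : d P I + (t P + (t Q + d Q I)) = 0 := by
          rw [← e]
          linear_combination -CharTwo.add_self_eq_zero (t (P ⊓ Q))
        exact CharTwo.add_eq_zero.mp e₃
    · refine ht P I hP hI hPI ?_
      have : ∑ i, I i ≠ ∑ i, lo i + ((n : ℤ) + 1) := fun h' => h ⟨h', P, hP, hPI⟩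
      omega

/-- Any two sign assignments differ by the coboundary of a `0`-cochain `𝓉 : Cube → 𝔽₂`:
on every edge `(I,I')`, `𝓈(I,I') + 𝓈'(I,I') = 𝓉(I) + 𝓉(I')`. -/
theorem sign_assignments_differ_by_coboundary {ι : Type*} [Fintype ι]
    (lo hi : ι → ℤ) (hlohi : ∀ i, lo i ≤ hi i)
    (s s' : (ι → ℤ) → (ι → ℤ) → ZMod 2)
    (hs : IsSignAssignment lo hi s) (hs' : IsSignAssignment lo hi s') :
    ∃ t : (ι → ℤ) → ZMod 2, ∀ I I', I ∈ Cube lo hi → I' ∈ Cube lo hi →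
      IsSucc I I' → s I I' + s' I I' = t I + t I' := by
  obtain ⟨t, ht⟩ := exists_potential_of_height_le lo hi (fun I I' => s I I' + s' I I')
    (fun I I₁ I₂ I₁₂ h h₁ h₂ h₁₂ hne a b c e => by
      linear_combination hs I I₁ I₂ I₁₂ h h₁ h₂ h₁₂ hne a b c e +
        hs' I I₁ I₂ I₁₂ h h₁ h₂ h₁₂ hne a b c e + CharTwo.add_self_eq_zero (1 : ZMod 2))
    (∑ i, hi i - ∑ i, lo i).toNat
  refine ⟨t, fun I I' hI hI' h => ht I I' hI hI' h ?_⟩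
  have : ∑ i, I' i ≤ ∑ i, hi i := Finset.sum_le_sum fun i _ => (hI' i).2
  omega
end

section
/- Let 𝓈 be a sign assignment on a generalized cube Cube. Then there exists a unique sign assignment 𝓈' on Cube × {0,1} satisfying (S-1) 𝓈'((I,0),(I',0)) = 𝓈(I,I') for every edge (I,I') of Cube, and (S-2) 𝓈'((I,0),(I,1)) = 0 for every vertex I of Cube. Moreover, this unique extension is given on the remaining edges by 𝓈'((I,1),(I',1)) = 1 + 𝓈(I,I') for every edge (I,I') of Cube. -/
/-- The extended cube `Cube × {0,1}`: vertices are pairs `(I, x)` with `I` in the cube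
and `x ∈ {0,1}`. -/
def CubeE {ι : Type*} (lo hi : ι → ℤ) : Set ((ι → ℤ) × ℤ) :=
  {J | J.1 ∈ Cube lo hi ∧ 0 ≤ J.2 ∧ J.2 ≤ 1}

/-- Immediate successor relation on the extended cube `Cube × {0,1}`. -/
def IsSuccE {ι : Type*} (J J' : (ι → ℤ) × ℤ) : Prop :=
  (IsSucc J.1 J'.1 ∧ J'.2 = J.2) ∨ (J'.1 = J.1 ∧ J'.2 = J.2 + 1)

/-- A sign assignment on the extended cube `Cube × {0,1}`. -/
def IsSignAssignmentE {ι : Type*} (lo hi : ι → ℤ)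
    (s : ((ι → ℤ) × ℤ) → ((ι → ℤ) × ℤ) → ZMod 2) : Prop :=
  ∀ J J₁ J₂ J₁₂ : (ι → ℤ) × ℤ, J ∈ CubeE lo hi → J₁ ∈ CubeE lo hi →
    J₂ ∈ CubeE lo hi → J₁₂ ∈ CubeE lo hi → J₁ ≠ J₂ → IsSuccE J J₁ → IsSuccE J J₂ →
    IsSuccE J₁ J₁₂ → IsSuccE J₂ J₁₂ →
    s J J₁ + s J J₂ + s J₁ J₁₂ + s J₂ J₁₂ = 1

/-- The extended sign assignment: `𝓈(I,I') + x` on a horizontal edge at height `x`, and `0` on a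
vertical edge. -/
def extendSign {ι : Type*} (s : (ι → ℤ) → (ι → ℤ) → ZMod 2) (J J' : (ι → ℤ) × ℤ) : ZMod 2 :=
  if J'.2 = J.2 then s J.1 J'.1 + (J.2 : ZMod 2) else 0

theorem isSignAssignmentE_extendSign {ι : Type*} {lo hi : ι → ℤ}
    {s : (ι → ℤ) → (ι → ℤ) → ZMod 2} (hs : IsSignAssignment lo hi s) :
    IsSignAssignmentE lo hi (extendSign s) := by
  rintro ⟨I, x⟩ ⟨I₁, x₁⟩ ⟨I₂, x₂⟩ ⟨I₃, x₃⟩ ⟨hI, hx, hx'⟩ ⟨hI₁, hx₁, hx₁'⟩ ⟨hI₂, hx₂, hx₂'⟩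
    ⟨hI₃, hx₃, hx₃'⟩ hne h₁ h₂ h₃ h₄
  have two (a : ZMod 2) : a + a = 0 := CharTwo.add_self_eq_zero a
  simp only [IsSuccE] at *
  -- Each disjunction says whether the edge is horizontal or vertical. Comparing heights leaves the
  -- five cases below; two vertical edges in a row are impossible.
  rcases h₁ with ⟨h₁, e₁⟩ | ⟨h₁, e₁⟩ <;> rcases h₂ with ⟨h₂, e₂⟩ | ⟨h₂, e₂⟩ <;>
    rcases h₃ with ⟨h₃, e₃⟩ | ⟨h₃, e₃⟩ <;> rcases h₄ with ⟨h₄, e₄⟩ | ⟨h₄, e₄⟩ <;>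
    try (exfalso; omega)
  · -- horizontal face
    subst x₁ x₂ x₃
    have hne' : I₁ ≠ I₂ := fun h => hne (by rw [h])
    have := hs I I₁ I₂ I₃ hI hI₁ hI₂ hI₃ hne' h₁ h₂ h₃ h₄
    simp only [extendSign, if_true]
    linear_combination this + 2 * two (x : ZMod 2)
  · -- both paths are horizontal then vertical, so the middle vertices coincide
    exact absurd (by rw [e₁, e₂, ← h₃, ← h₄]) hne
  · -- vertical face
    subst I₂ I₃ x₁ x₂ x₃
    simp only [extendSign, if_true]
    rw [if_neg (by omega), if_neg (by omega)]
    push_cast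
    linear_combination two (s I I₁) + two (x : ZMod 2)
  · -- vertical face, with the two middle vertices exchanged
    subst I₁ I₃ x₁ x₂ x₃
    simp only [extendSign, if_true]
    rw [if_neg (by omega), if_neg (by omega)]
    push_cast
    linear_combination two (s I I₂) + two (x : ZMod 2)
  · -- both paths are vertical then horizontal, so the middle vertices coincide
    exact absurd (by rw [h₁, h₂, e₁, e₂]) hne

/-- Lemma on extending a sign assignment `𝓈` on `Cube` to `Cube × {0,1}`: there exists a
unique sign assignment `𝓈'` satisfying (S-1) `𝓈'((I,0),(I',0)) = 𝓈(I,I')` and (S-2)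
`𝓈'((I,0),(I,1)) = 0`; moreover it satisfies `𝓈'((I,1),(I',1)) = 1 + 𝓈(I,I')` on the
remaining edges.  (Uniqueness means equality on all edges of the extended cube.) -/
theorem exists_unique_extension_sign_assignment {ι : Type*} [Fintype ι]
    (lo hi : ι → ℤ) (hlohi : ∀ i, lo i ≤ hi i)
    (s : (ι → ℤ) → (ι → ℤ) → ZMod 2) (hs : IsSignAssignment lo hi s) :
    ∃ s' : ((ι → ℤ) × ℤ) → ((ι → ℤ) × ℤ) → ZMod 2,
      IsSignAssignmentE lo hi s' ∧
      (∀ I I', I ∈ Cube lo hi → I' ∈ Cube lo hi → IsSucc I I' →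
        s' (I, 0) (I', 0) = s I I') ∧
      (∀ I, I ∈ Cube lo hi → s' (I, 0) (I, 1) = 0) ∧
      (∀ I I', I ∈ Cube lo hi → I' ∈ Cube lo hi → IsSucc I I' →
        s' (I, 1) (I', 1) = 1 + s I I') ∧
      (∀ s'' : ((ι → ℤ) × ℤ) → ((ι → ℤ) × ℤ) → ZMod 2,
        IsSignAssignmentE lo hi s'' →
        (∀ I I', I ∈ Cube lo hi → I' ∈ Cube lo hi → IsSucc I I' →
          s'' (I, 0) (I', 0) = s I I') →
        (∀ I, I ∈ Cube lo hi → s'' (I, 0) (I, 1) = 0) →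
        ∀ J J', J ∈ CubeE lo hi → J' ∈ CubeE lo hi → IsSuccE J J' →
          s'' J J' = s' J J') := by
  refine ⟨extendSign s, isSignAssignmentE_extendSign hs, ?_, ?_, ?_, ?_⟩
  · intro I I' _ _ _
    simp [extendSign]
  · intro I _
    simp [extendSign]
  · intro I I' _ _ _
    simp [extendSign, add_comm]
  · rintro s'' hs'' h0 hv ⟨I, x⟩ ⟨I', x'⟩ ⟨hI, hx, hx1⟩ ⟨hI', hx', hx1'⟩ h
    simp only [IsSuccE] at *
    rcases h with ⟨h, rfl⟩ | ⟨rfl, rfl⟩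
    · obtain rfl | rfl : x' = 0 ∨ x' = 1 := by omega
      · simp [extendSign, h0 I I' hI hI' h]
      · -- the face condition on the vertical face over the edge `(I, I')`
        have key := hs'' (I, 0) (I', 0) (I, 1) (I', 1) ⟨hI, by simp⟩ ⟨hI', by simp⟩
          ⟨hI, by simp⟩ ⟨hI', by simp⟩ (by simp) (Or.inl ⟨h, rfl⟩) (Or.inr ⟨rfl, by simp⟩)
          (Or.inr ⟨rfl, by simp⟩) (Or.inl ⟨h, rfl⟩)
        rw [h0 I I' hI hI' h, hv I hI, hv I' hI'] at key
        simp only [extendSign, if_true, Int.cast_one]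
        linear_combination key - CharTwo.add_self_eq_zero (s I I')
    · obtain rfl : x = 0 := by omega
      simp [extendSign, hv I' hI]
end

section
/- Let 𝓈₁, 𝓈₂ be two sign assignments on a generalized cube Cube and suppose 𝓈₁ − 𝓈₂ = ∂𝓉 for a 0-cochain 𝓉 : Cube → 𝔽₂, i.e. 𝓈₁(I,I') + 𝓈₂(I,I') = 𝓉(I) + 𝓉(I') for every edge (I,I'). Let 𝓈₁', 𝓈₂' be the unique extensions of 𝓈₁, 𝓈₂ to Cube × {0,1} satisfying conditions (S-1) and (S-2), and define the 0-cochain 𝓉' on Cube × {0,1} by 𝓉'(I,x) := 𝓉(I). Then 𝓈₁' − 𝓈₂' = ∂𝓉', i.e. 𝓈₁'(J,J') + 𝓈₂'(J,J') = 𝓉'(J) + 𝓉'(J') for every edge (J,J') of Cube × {0,1}. -/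
/-- The square over an edge of `Cube` has two vertical sides, on which an extension vanishes by
(S-2); hence the values on its bottom and top sides sum to `1`. -/
theorem extension_top {ι : Type*} {lo hi : ι → ℤ} {s : (ι → ℤ) → (ι → ℤ) → ZMod 2}
    {s' : ((ι → ℤ) × ℤ) → ((ι → ℤ) × ℤ) → ZMod 2} (hs' : IsSignAssignmentE lo hi s')
    (hS1 : ∀ I I', I ∈ Cube lo hi → I' ∈ Cube lo hi → IsSucc I I' → s' (I, 0) (I', 0) = s I I')
    (hS2 : ∀ I, I ∈ Cube lo hi → s' (I, 0) (I, 1) = 0)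
    {I I' : ι → ℤ} (hI : I ∈ Cube lo hi) (hI' : I' ∈ Cube lo hi) (h : IsSucc I I') :
    s' (I, 1) (I', 1) = 1 + s I I' := by
  have key := hs' (I, 0) (I', 0) (I, 1) (I', 1) ⟨hI, by simp⟩ ⟨hI', by simp⟩ ⟨hI, by simp⟩
    ⟨hI', by simp⟩ (by simp) (Or.inl ⟨h, rfl⟩) (Or.inr ⟨rfl, by simp⟩) (Or.inr ⟨rfl, by simp⟩)
    (Or.inl ⟨h, rfl⟩)
  rw [hS1 I I' hI hI' h, hS2 I hI, hS2 I' hI'] at key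
  generalize s I I' = a at key ⊢
  generalize s' (I, 1) (I', 1) = b at key ⊢
  revert a b
  decide

/-- If `𝓈₁ − 𝓈₂ = ∂𝓉` on `Cube`, and `𝓈₁'`, `𝓈₂'` are the (unique) extensions of
`𝓈₁`, `𝓈₂` to `Cube × {0,1}` satisfying (S-1) and (S-2), then `𝓈₁' − 𝓈₂' = ∂𝓉'`, where
`𝓉'(I,x) := 𝓉(I)`. -/
theorem extensions_differ_by_extended_coboundary {ι : Type*} [Fintype ι]
    (lo hi : ι → ℤ) (hlohi : ∀ i, lo i ≤ hi i)
    (s₁ s₂ : (ι → ℤ) → (ι → ℤ) → ZMod 2)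
    (hs₁ : IsSignAssignment lo hi s₁) (hs₂ : IsSignAssignment lo hi s₂)
    (t : (ι → ℤ) → ZMod 2)
    (ht : ∀ I I', I ∈ Cube lo hi → I' ∈ Cube lo hi → IsSucc I I' →
      s₁ I I' + s₂ I I' = t I + t I')
    (s₁' s₂' : ((ι → ℤ) × ℤ) → ((ι → ℤ) × ℤ) → ZMod 2)
    (hs₁' : IsSignAssignmentE lo hi s₁')
    (hS1₁ : ∀ I I', I ∈ Cube lo hi → I' ∈ Cube lo hi → IsSucc I I' →
      s₁' (I, 0) (I', 0) = s₁ I I')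
    (hS2₁ : ∀ I, I ∈ Cube lo hi → s₁' (I, 0) (I, 1) = 0)
    (hs₂' : IsSignAssignmentE lo hi s₂')
    (hS1₂ : ∀ I I', I ∈ Cube lo hi → I' ∈ Cube lo hi → IsSucc I I' →
      s₂' (I, 0) (I', 0) = s₂ I I')
    (hS2₂ : ∀ I, I ∈ Cube lo hi → s₂' (I, 0) (I, 1) = 0) :
    ∀ J J', J ∈ CubeE lo hi → J' ∈ CubeE lo hi → IsSuccE J J' →
      s₁' J J' + s₂' J J' = t J.1 + t J'.1 := by
  rintro ⟨I, x⟩ ⟨I', x'⟩ ⟨hI, hx0, hx1⟩ ⟨hI', hx0', hx1'⟩ (⟨h, hx⟩ | ⟨h, hx⟩)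
  all_goals dsimp only at *
  · subst hx
    obtain rfl | rfl : x' = 0 ∨ x' = 1 := by omega
    · rw [hS1₁ I I' hI hI' h, hS1₂ I I' hI hI' h, ht I I' hI hI' h]
    · rw [extension_top hs₁' hS1₁ hS2₁ hI hI' h, extension_top hs₂' hS1₂ hS2₂ hI hI' h,
        ← ht I I' hI hI' h, add_add_add_comm, CharTwo.add_self_eq_zero, zero_add]
  · obtain rfl : x = 0 := by omega
    obtain rfl : x' = 1 := by omega
    subst h
    rw [hS2₁ _ hI, hS2₂ _ hI, CharTwo.add_self_eq_zero, CharTwo.add_self_eq_zero]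
end

section
/- Let 𝓈 be a sign assignment on a generalized cube Cube. Let 𝓈₁ be the unique extension of 𝓈 to Cube × {0,1} (satisfying 𝓈₁((I,0),(I',0)) = 𝓈(I,I') and 𝓈₁((I,0),(I,1)) = 0), and let 𝓈' be the unique sign assignment on (Cube × {0,1}) × {−1,0} satisfying 𝓈'((J,0),(J',0)) = 𝓈₁(J,J') for every edge (J,J') of Cube × {0,1} and 𝓈'((J,−1),(J,0)) = 0 for every vertex J. Then for every edge (I,I') of Cube one has 𝓈'((I,1,−1),(I',1,−1)) = 𝓈(I,I'). -/
/-- The doubly extended cube `(Cube × {0,1}) × {−1,0}`: vertices are triples `(I, x, y)`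
with `I` in the cube, `x ∈ {0,1}` and `y ∈ {−1,0}`. -/
def CubeE2 {ι : Type*} (lo hi : ι → ℤ) : Set ((ι → ℤ) × ℤ × ℤ) :=
  {J | J.1 ∈ Cube lo hi ∧ (0 ≤ J.2.1 ∧ J.2.1 ≤ 1) ∧ (-1 ≤ J.2.2 ∧ J.2.2 ≤ 0)}

/-- Immediate successor relation on the doubly extended cube. -/
def IsSuccE2 {ι : Type*} (J J' : (ι → ℤ) × ℤ × ℤ) : Prop :=
  (IsSucc J.1 J'.1 ∧ J'.2 = J.2) ∨
  (J'.1 = J.1 ∧ J'.2.1 = J.2.1 + 1 ∧ J'.2.2 = J.2.2) ∨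
  (J'.1 = J.1 ∧ J'.2.1 = J.2.1 ∧ J'.2.2 = J.2.2 + 1)

/-- A sign assignment on the doubly extended cube. -/
def IsSignAssignmentE2 {ι : Type*} (lo hi : ι → ℤ)
    (s : ((ι → ℤ) × ℤ × ℤ) → ((ι → ℤ) × ℤ × ℤ) → ZMod 2) : Prop :=
  ∀ J J₁ J₂ J₁₂ : (ι → ℤ) × ℤ × ℤ, J ∈ CubeE2 lo hi → J₁ ∈ CubeE2 lo hi →
    J₂ ∈ CubeE2 lo hi → J₁₂ ∈ CubeE2 lo hi → J₁ ≠ J₂ → IsSuccE2 J J₁ → IsSuccE2 J J₂ →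
    IsSuccE2 J₁ J₁₂ → IsSuccE2 J₂ J₁₂ →
    s J J₁ + s J J₂ + s J₁ J₁₂ + s J₂ J₁₂ = 1

/-- If `𝓈₁` is the unique extension of `𝓈` to `Cube × {0,1}` and `𝓈'` is the unique
extension of `𝓈₁` to `(Cube × {0,1}) × {−1,0}`, then `𝓈'((I,1,−1),(I',1,−1)) = 𝓈(I,I')`
for every edge `(I,I')` of `Cube`. -/
theorem double_extension_restricts_to_original {ι : Type*} [Fintype ι]
    (lo hi : ι → ℤ) (hlohi : ∀ i, lo i ≤ hi i)
    (s : (ι → ℤ) → (ι → ℤ) → ZMod 2) (hs : IsSignAssignment lo hi s)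
    (s₁ : ((ι → ℤ) × ℤ) → ((ι → ℤ) × ℤ) → ZMod 2)
    (hs₁ : IsSignAssignmentE lo hi s₁)
    (hS1₁ : ∀ I I', I ∈ Cube lo hi → I' ∈ Cube lo hi → IsSucc I I' →
      s₁ (I, 0) (I', 0) = s I I')
    (hS2₁ : ∀ I, I ∈ Cube lo hi → s₁ (I, 0) (I, 1) = 0)
    (s' : ((ι → ℤ) × ℤ × ℤ) → ((ι → ℤ) × ℤ × ℤ) → ZMod 2)
    (hs' : IsSignAssignmentE2 lo hi s')
    (hS1' : ∀ J J', J ∈ CubeE lo hi → J' ∈ CubeE lo hi → IsSuccE J J' →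
      s' (J.1, J.2, 0) (J'.1, J'.2, 0) = s₁ J J')
    (hS2' : ∀ J, J ∈ CubeE lo hi → s' (J.1, J.2, -1) (J.1, J.2, 0) = 0) :
    ∀ I I', I ∈ Cube lo hi → I' ∈ Cube lo hi → IsSucc I I' →
      s' (I, 1, -1) (I', 1, -1) = s I I' := by
  intro I I' hI hI' hII
  have hne : I' ≠ I := by
    obtain ⟨j, hj, -⟩ := hII
    intro h
    rw [h] at hj
    omega
  have mE : ∀ K ∈ Cube lo hi, ∀ x : ℤ, 0 ≤ x → x ≤ 1 → (K, x) ∈ CubeE lo hi :=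
    fun K hK x h0 h1 => ⟨hK, h0, h1⟩
  have mE2 : ∀ K ∈ Cube lo hi, ∀ y : ℤ, -1 ≤ y → y ≤ 0 →
      (K, (1 : ℤ), y) ∈ CubeE2 lo hi :=
    fun K hK y h0 h1 => ⟨hK, ⟨by norm_num, le_rfl⟩, h0, h1⟩
  -- The face `(I,I') × {0,1}`: its edges along `{0,1}` have value `0`,
  -- so `s₁` on the top edge is `s I I' + 1`.
  have face₁ := hs₁ (I, 0) (I', 0) (I, 1) (I', 1)
    (mE I hI 0 le_rfl zero_le_one) (mE I' hI' 0 le_rfl zero_le_one)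
    (mE I hI 1 zero_le_one le_rfl) (mE I' hI' 1 zero_le_one le_rfl)
    (fun h => hne (congrArg Prod.fst h))
    (Or.inl ⟨hII, rfl⟩) (Or.inr ⟨rfl, by norm_num⟩)
    (Or.inr ⟨rfl, by norm_num⟩) (Or.inl ⟨hII, rfl⟩)
  -- The face `(I,I') × {1} × {−1,0}`: passing from `y = 0` to `y = −1` adds another `1`.
  have face₂ := hs' (I, 1, -1) (I', 1, -1) (I, 1, 0) (I', 1, 0)
    (mE2 I hI (-1) le_rfl (by norm_num)) (mE2 I' hI' (-1) le_rfl (by norm_num))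
    (mE2 I hI 0 (by norm_num) le_rfl) (mE2 I' hI' 0 (by norm_num) le_rfl)
    (fun h => hne (congrArg Prod.fst h))
    (Or.inl ⟨hII, rfl⟩) (Or.inr (Or.inr ⟨rfl, rfl, by norm_num⟩))
    (Or.inr (Or.inr ⟨rfl, rfl, by norm_num⟩)) (Or.inl ⟨hII, rfl⟩)
  have top := hS1' (I, 1) (I', 1) (mE I hI 1 zero_le_one le_rfl)
    (mE I' hI' 1 zero_le_one le_rfl) (Or.inl ⟨hII, rfl⟩)
  have v := hS2' (I, 1) (mE I hI 1 zero_le_one le_rfl)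
  have v' := hS2' (I', 1) (mE I' hI' 1 zero_le_one le_rfl)
  dsimp only at top v v'
  rw [hS1₁ I I' hI hI' hII, hS2₁ I hI, hS2₁ I' hI'] at face₁
  rw [top, v, v'] at face₂
  linear_combination face₂ - face₁
end

section
/- Let 𝓈 be a sign assignment on a generalized cube Cube, let g be an edge-preserving bijection of Cube, and let 𝓉 : Cube → 𝔽₂ be a 0-cochain satisfying 𝓈(I,I') + 𝓈(gI,gI') = 𝓉(I) + 𝓉(I') for every edge (I,I'). Let m ≥ 1 and let 𝓈' be the m-fold extension of 𝓈 to Cube × {0,1}^m. Define ĝ(I,x₁,…,xₘ) := (gI,x₂,…,xₘ,x₁) and the 0-cochain 𝓉'(I,x₁,…,xₘ) := 𝓉(I) + x₁·(x₂ + ⋯ + xₘ). Then for every edge (J,J') of Cube × {0,1}^m one has 𝓈'(J,J') + 𝓈'(ĝJ,ĝJ') = 𝓉'(J) + 𝓉'(J'). -/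
/-- The `m`-fold extended cube `Cube × {0,1}^m`. -/
def CubeExt {ι : Type*} (lo hi : ι → ℤ) (m : ℕ) : Set ((ι → ℤ) × (Fin m → ℤ)) :=
  {J | J.1 ∈ Cube lo hi ∧ ∀ k, 0 ≤ J.2 k ∧ J.2 k ≤ 1}

/-- Immediate successor relation on `Cube × {0,1}^m`. -/
def IsSuccExt {ι : Type*} {m : ℕ} (J J' : (ι → ℤ) × (Fin m → ℤ)) : Prop :=
  (IsSucc J.1 J'.1 ∧ J'.2 = J.2) ∨
  (J'.1 = J.1 ∧ ∃ k, J'.2 k = J.2 k + 1 ∧ ∀ l, l ≠ k → J'.2 l = J.2 l)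

/-- Rotation `(x₀,…,xₙ) ↦ (x₁,…,xₙ,x₀)` of the appended coordinates, here
numbered from `0`. -/
def rotateCoords {n : ℕ} (x : Fin (n + 1) → ℤ) : Fin (n + 1) → ℤ :=
  fun k => x ⟨((k : ℕ) + 1) % (n + 1), Nat.mod_lt _ n.succ_pos⟩

lemma rotateCoords_castSucc {n : ℕ} (x : Fin (n + 1) → ℤ) (j : Fin n) :
    rotateCoords x j.castSucc = x j.succ := by
  unfold rotateCoords
  congr 1
  ext
  simp [Nat.mod_eq_of_lt]

lemma rotateCoords_last {n : ℕ} (x : Fin (n + 1) → ℤ) :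
    rotateCoords x (Fin.last n) = x 0 := by
  unfold rotateCoords
  congr 1
  ext
  simp

lemma sum_rotateCoords {n : ℕ} (x : Fin (n + 1) → ℤ) :
    ∑ i, (rotateCoords x i : ZMod 2) = ∑ i, (x i : ZMod 2) := by
  rw [Fin.sum_univ_castSucc, Fin.sum_univ_succ]
  simp only [rotateCoords_castSucc, rotateCoords_last]
  ring

lemma sum_gt_zero {n : ℕ} (x : Fin (n + 1) → ℤ) :
    ∑ i ∈ Finset.univ.filter (fun i => 0 < i), (x i : ZMod 2) =
      ∑ i : Fin n, (x i.succ : ZMod 2) := by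
  rw [Finset.sum_filter, Fin.sum_univ_succ]
  simp

lemma sum_ne_zero {n : ℕ} (x : Fin (n + 1) → ℤ) :
    ∑ i ∈ Finset.univ.filter (fun i : Fin (n + 1) => i ≠ 0), (x i : ZMod 2) =
      ∑ i : Fin n, (x i.succ : ZMod 2) := by
  rw [Finset.sum_filter, Fin.sum_univ_succ]
  simp

lemma sum_gt_last {n : ℕ} (x : Fin (n + 1) → ℤ) :
    ∑ i ∈ Finset.univ.filter (fun i => Fin.last n < i), (x i : ZMod 2) = 0 := by
  rw [Finset.sum_filter]
  simp [Fin.not_lt.mpr (Fin.le_last _)]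

/-- Beyond the moved coordinate, the rotated vector has the same entries as the original one and,
in the last place, the additional entry `x₀`. -/
lemma sum_gt_rotate_castSucc {n : ℕ} (x : Fin (n + 1) → ℤ) (j : Fin n) :
    ∑ i ∈ Finset.univ.filter (fun i => j.castSucc < i), (rotateCoords x i : ZMod 2) =
      ∑ i ∈ Finset.univ.filter (fun i => j.succ < i), (x i : ZMod 2) + (x 0 : ZMod 2) := by
  rw [Finset.sum_filter, Finset.sum_filter, Fin.sum_univ_castSucc, Fin.sum_univ_succ]
  simp [rotateCoords_castSucc, rotateCoords_last, Fin.castSucc_lt_last]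

/-- Lemma on the equivariance defect of the `m`-fold extension of a sign assignment:
if `𝓈(I,I') + 𝓈(gI,gI') = 𝓉(I) + 𝓉(I')` on edges of `Cube`, `𝓈'` is the `m`-fold
extension of `𝓈` to `Cube × {0,1}^m` (characterized by its values on edges), `ĝ` is the
rotation `(I,x₁,…,xₘ) ↦ (gI,x₂,…,xₘ,x₁)`, and `𝓉'(I,x₁,…,xₘ) := 𝓉(I) + x₁(x₂+⋯+xₘ)`,
then `𝓈'(J,J') + 𝓈'(ĝJ,ĝJ') = 𝓉'(J) + 𝓉'(J')` on every edge of `Cube × {0,1}^m`. -/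
theorem mfold_extension_equivariance {ι : Type*} [Fintype ι]
    (lo hi : ι → ℤ) (hlohi : ∀ i, lo i ≤ hi i) (m : ℕ) (hm : 0 < m)
    (s : (ι → ℤ) → (ι → ℤ) → ZMod 2) (hs : IsSignAssignment lo hi s)
    (g : (ι → ℤ) → (ι → ℤ))
    (hgbij : Set.BijOn g (Cube lo hi) (Cube lo hi))
    (hgsucc : ∀ I I', I ∈ Cube lo hi → I' ∈ Cube lo hi → IsSucc I I' →
      IsSucc (g I) (g I'))
    (hgsucc' : ∀ I I', I ∈ Cube lo hi → I' ∈ Cube lo hi → IsSucc (g I) (g I') →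
      IsSucc I I')
    (t : (ι → ℤ) → ZMod 2)
    (ht : ∀ I I', I ∈ Cube lo hi → I' ∈ Cube lo hi → IsSucc I I' →
      s I I' + s (g I) (g I') = t I + t I')
    (s' : ((ι → ℤ) × (Fin m → ℤ)) → ((ι → ℤ) × (Fin m → ℤ)) → ZMod 2)
    (hchar1 : ∀ (I : ι → ℤ) (x y : Fin m → ℤ) (k : Fin m),
      (I, x) ∈ CubeExt lo hi m → (I, y) ∈ CubeExt lo hi m →
      y k = x k + 1 → (∀ i, i ≠ k → y i = x i) →
      s' (I, x) (I, y) = ∑ i ∈ Finset.univ.filter (fun i => k < i), (x i : ZMod 2))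
    (hchar2 : ∀ (I I' : ι → ℤ) (x : Fin m → ℤ),
      (I, x) ∈ CubeExt lo hi m → (I', x) ∈ CubeExt lo hi m → IsSucc I I' →
      s' (I, x) (I', x) = (∑ i, (x i : ZMod 2)) + s I I') :
    ∀ J J', J ∈ CubeExt lo hi m → J' ∈ CubeExt lo hi m → IsSuccExt J J' →
      s' J J' +
        s' (g J.1, fun k => J.2 ⟨((k : ℕ) + 1) % m, Nat.mod_lt _ hm⟩)
           (g J'.1, fun k => J'.2 ⟨((k : ℕ) + 1) % m, Nat.mod_lt _ hm⟩) =
      (t J.1 + (J.2 ⟨0, hm⟩ : ZMod 2) *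
          ∑ k ∈ Finset.univ.filter (fun k : Fin m => k ≠ ⟨0, hm⟩), (J.2 k : ZMod 2)) +
      (t J'.1 + (J'.2 ⟨0, hm⟩ : ZMod 2) *
          ∑ k ∈ Finset.univ.filter (fun k : Fin m => k ≠ ⟨0, hm⟩), (J'.2 k : ZMod 2)) := by
  rintro ⟨I, x⟩ ⟨I', x'⟩ ⟨hI, hx⟩ ⟨hI', hx'⟩ hJ
  obtain ⟨n, rfl⟩ : ∃ n, m = n + 1 := ⟨m - 1, by omega⟩
  have h0 : (⟨0, hm⟩ : Fin (n + 1)) = 0 := rfl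
  dsimp only at hI hx hI' hx' ⊢
  change s' (I, x) (I', x') + s' (g I, rotateCoords x) (g I', rotateCoords x') = _
  have hrot : ∀ z : Fin (n + 1) → ℤ, (∀ k, 0 ≤ z k ∧ z k ≤ 1) →
      ∀ k, 0 ≤ rotateCoords z k ∧ rotateCoords z k ≤ 1 := fun z hz k => hz _
  have hgI := hgbij.mapsTo hI
  have hgI' := hgbij.mapsTo hI'
  rw [h0, sum_ne_zero, sum_ne_zero]
  rcases hJ with ⟨hsucc, hxx⟩ | ⟨hII, k, hk, hl⟩
  · dsimp only at hsucc hxx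
    subst hxx
    rw [hchar2 _ _ _ ⟨hI, hx⟩ ⟨hI', hx⟩ hsucc,
      hchar2 (g I) (g I') (rotateCoords x') ⟨hgI, hrot _ hx⟩ ⟨hgI', hrot _ hx⟩ (hgsucc _ _ hI hI' hsucc),
      sum_rotateCoords]
    linear_combination ht I I' hI hI' hsucc +
      CharTwo.add_self_eq_zero (∑ i, (x' i : ZMod 2)) -
      CharTwo.add_self_eq_zero ((x' 0 : ZMod 2) * ∑ i : Fin n, (x' i.succ : ZMod 2))
  · dsimp only at hII hk hl
    subst hII
    rw [hchar1 _ _ _ k ⟨hI, hx⟩ ⟨hI, hx'⟩ hk hl]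
    induction k using Fin.cases with
    | zero =>
      have hrest : ∀ i : Fin n, x' i.succ = x i.succ := fun i => hl _ (Fin.succ_ne_zero i)
      rw [hchar1 _ (rotateCoords x) (rotateCoords x') (Fin.last n) ⟨hgI, hrot _ hx⟩ ⟨hgI, hrot _ hx'⟩
        (by simpa only [rotateCoords_last] using hk)
        (fun i hi => by
          obtain ⟨j, rfl⟩ := Fin.exists_castSucc_eq.mpr hi
          simpa only [rotateCoords_castSucc] using hrest j),
        sum_gt_last, sum_gt_zero]
      simp only [hrest, hk]
      push_cast
      linear_combination -CharTwo.add_self_eq_zero (t I') -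
        CharTwo.add_self_eq_zero ((x 0 : ZMod 2) * ∑ i : Fin n, (x i.succ : ZMod 2))
    | succ j =>
      have hzero : x' 0 = x 0 := hl _ (Fin.succ_ne_zero j).symm
      -- The tail sum `x₁ + ⋯ + xₙ` increases by one along the edge.
      have hsum : ∑ i : Fin n, (x' i.succ : ZMod 2) =
          ∑ i : Fin n, (x i.succ : ZMod 2) + 1 := by
        have hterm : ∀ i : Fin n, (x' i.succ : ZMod 2) =
            (x i.succ : ZMod 2) + if i = j then 1 else 0 := by
          intro i
          split_ifs with hij
          · subst hij
            rw [hk]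
            push_cast
            rfl
          · rw [hl _ (fun h => hij (Fin.succ_injective _ h)), add_zero]
        simp [hterm, Finset.sum_add_distrib]
      rw [hchar1 _ (rotateCoords x) (rotateCoords x') j.castSucc ⟨hgI, hrot _ hx⟩ ⟨hgI, hrot _ hx'⟩
        (by simpa only [rotateCoords_castSucc] using hk)
        (fun i hi => by
          induction i using Fin.lastCases with
          | last => simpa only [rotateCoords_last] using hzero
          | cast i =>
            simp only [rotateCoords_castSucc]
            exact hl _ fun h => hi (congrArg Fin.castSucc (Fin.succ_injective _ h))),
        sum_gt_rotate_castSucc, hsum, hzero]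
      linear_combination -CharTwo.add_self_eq_zero (t I') -
        CharTwo.add_self_eq_zero ((x 0 : ZMod 2) * ∑ i : Fin n, (x i.succ : ZMod 2)) +
        CharTwo.add_self_eq_zero
          (∑ i ∈ Finset.univ.filter (fun i => j.succ < i), (x i : ZMod 2))
end

section
/- Let 𝓈 be a sign assignment on a generalized cube Cube, let g be an edge-preserving involution of Cube (g ∘ g = id), and let 𝓉 : Cube → 𝔽₂ satisfy 𝓈(I,I') + 𝓈(gI,gI') = 𝓉(I) + 𝓉(I') for every edge (I,I'). Let 𝓈' be the 4-fold extension of 𝓈 to Cube × {0,1}⁴. Define ĝ(I,x₁,x₂,x₃,x₄) := (gI,x₃,x₄,x₁,x₂) and the 0-cochain 𝓉'(I,x₁,x₂,x₃,x₄) := 𝓉(I) + (x₁ + x₂)·(x₃ + x₄). Then for every edge (J,J') of Cube × {0,1}⁴ one has 𝓈'(J,J') + 𝓈'(ĝJ,ĝJ') = 𝓉'(J) + 𝓉'(J'). -/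
/-- Key sign lemma for the equivariant Reidemeister 2a move with a `ℤ/2`-action:
with `𝓈'` the 4-fold extension of `𝓈` to `Cube × {0,1}⁴` (characterized by its values
on edges), `ĝ(I,x₁,x₂,x₃,x₄) := (gI,x₃,x₄,x₁,x₂)` and
`𝓉'(I,x₁,x₂,x₃,x₄) := 𝓉(I) + (x₁+x₂)(x₃+x₄)`, one has
`𝓈'(J,J') + 𝓈'(ĝJ,ĝJ') = 𝓉'(J) + 𝓉'(J')` on every edge of `Cube × {0,1}⁴`. -/
theorem reidemeister_two_sign_lemma {ι : Type*} [Fintype ι]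
    (lo hi : ι → ℤ) (hlohi : ∀ i, lo i ≤ hi i)
    (s : (ι → ℤ) → (ι → ℤ) → ZMod 2) (hs : IsSignAssignment lo hi s)
    (g : (ι → ℤ) → (ι → ℤ))
    (hgbij : Set.BijOn g (Cube lo hi) (Cube lo hi))
    (hginv : ∀ I, I ∈ Cube lo hi → g (g I) = I)
    (hgsucc : ∀ I I', I ∈ Cube lo hi → I' ∈ Cube lo hi → IsSucc I I' →
      IsSucc (g I) (g I'))
    (hgsucc' : ∀ I I', I ∈ Cube lo hi → I' ∈ Cube lo hi → IsSucc (g I) (g I') →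
      IsSucc I I')
    (t : (ι → ℤ) → ZMod 2)
    (ht : ∀ I I', I ∈ Cube lo hi → I' ∈ Cube lo hi → IsSucc I I' →
      s I I' + s (g I) (g I') = t I + t I')
    (s' : ((ι → ℤ) × (Fin 4 → ℤ)) → ((ι → ℤ) × (Fin 4 → ℤ)) → ZMod 2)
    (hchar1 : ∀ (I : ι → ℤ) (x y : Fin 4 → ℤ) (k : Fin 4),
      (I, x) ∈ CubeExt lo hi 4 → (I, y) ∈ CubeExt lo hi 4 →
      y k = x k + 1 → (∀ i, i ≠ k → y i = x i) →
      s' (I, x) (I, y) = ∑ i ∈ Finset.univ.filter (fun i => k < i), (x i : ZMod 2))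
    (hchar2 : ∀ (I I' : ι → ℤ) (x : Fin 4 → ℤ),
      (I, x) ∈ CubeExt lo hi 4 → (I', x) ∈ CubeExt lo hi 4 → IsSucc I I' →
      s' (I, x) (I', x) = (∑ i, (x i : ZMod 2)) + s I I') :
    ∀ J J', J ∈ CubeExt lo hi 4 → J' ∈ CubeExt lo hi 4 → IsSuccExt J J' →
      s' J J' + s' (g J.1, fun k => J.2 (k + 2)) (g J'.1, fun k => J'.2 (k + 2)) =
      (t J.1 + ((J.2 0 : ZMod 2) + (J.2 1 : ZMod 2)) *
          ((J.2 2 : ZMod 2) + (J.2 3 : ZMod 2))) +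
      (t J'.1 + ((J'.2 0 : ZMod 2) + (J'.2 1 : ZMod 2)) *
          ((J'.2 2 : ZMod 2) + (J'.2 3 : ZMod 2))) := by
  rintro ⟨I, x⟩ ⟨I', y⟩ hJ hJ' h
  have hg : ∀ (K : ι → ℤ) (z : Fin 4 → ℤ), (K, z) ∈ CubeExt lo hi 4 →
      (g K, fun k => z (k + 2)) ∈ CubeExt lo hi 4 :=
    fun K z hK => ⟨hgbij.mapsTo hK.1, fun k => hK.2 (k + 2)⟩
  have hshift : ∀ k : Fin 4, k + 2 + 2 = k := by decide
  have h2 : (2 : ZMod 2) = 0 := rfl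
  rcases h with ⟨hI, hxy⟩ | ⟨hI, k, hk, hl⟩
  · dsimp only at hI hxy
    subst hxy
    have ht' := ht I I' hJ.1 hJ'.1 hI
    have e1 := hchar2 I I' y hJ hJ' hI
    have e2 := hchar2 (g I) (g I') _ (hg _ _ hJ) (hg _ _ hJ') (hgsucc I I' hJ.1 hJ'.1 hI)
    have hsum : ∑ i, (y (i + 2) : ZMod 2) = ∑ i, (y i : ZMod 2) :=
      Equiv.sum_comp (Equiv.addRight (2 : Fin 4)) fun i => (y i : ZMod 2)
    rw [hsum] at e2
    simp only [e1, e2]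
    linear_combination ht' + (∑ i, (y i : ZMod 2)
      - ((y 0 : ZMod 2) + y 1) * ((y 2 : ZMod 2) + y 3)) * h2
  · dsimp only at hI hk hl
    subst hI
    have e1 := hchar1 I' x y k hJ hJ' hk hl
    have e2 := hchar1 (g I') _ _ (k + 2) (hg _ _ hJ) (hg _ _ hJ')
      (by simpa only [hshift] using hk)
      (fun i hi => hl (i + 2) fun h => hi (by rw [← h, hshift]))
    simp only [e1, e2, Finset.sum_filter, Fin.sum_univ_four]
    clear e1 e2 hg hchar1 hchar2
    -- In each direction, the two sides differ by an explicit multiple of `2 = 0`.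
    fin_cases k
    · have a1 := hl 1 (by decide)
      have a2 := hl 2 (by decide)
      have a3 := hl 3 (by decide)
      simp at hk
      simp [hk, a1, a2, a3]
      linear_combination ((x 1 : ZMod 2) - t I'
        - ((x 0 : ZMod 2) + x 1) * ((x 2 : ZMod 2) + x 3)) * h2
    · have a1 := hl 0 (by decide)
      have a2 := hl 2 (by decide)
      have a3 := hl 3 (by decide)
      simp at hk
      simp [hk, a1, a2, a3]
      linear_combination (-t I'
        - ((x 0 : ZMod 2) + x 1) * ((x 2 : ZMod 2) + x 3)) * h2
    · have a1 := hl 0 (by decide)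
      have a2 := hl 1 (by decide)
      have a3 := hl 3 (by decide)
      simp at hk
      simp [hk, a1, a2, a3]
      linear_combination ((x 3 : ZMod 2) - t I'
        - ((x 0 : ZMod 2) + x 1) * ((x 2 : ZMod 2) + x 3)) * h2
    · have a1 := hl 0 (by decide)
      have a2 := hl 1 (by decide)
      have a3 := hl 2 (by decide)
      simp at hk
      simp [hk, a1, a2, a3]
      linear_combination (-t I'
        - ((x 0 : ZMod 2) + x 1) * ((x 2 : ZMod 2) + x 3)) * h2
end

section
/- Let Cube be a generalized cube with minimal vertex I₀ (given by I₀ i = lo i for all i), let m ≥ 1, and let g be an edge-preserving bijection of Cube with g^m = id and g(I₀) = I₀. Let 𝓈 be a sign assignment on Cube and let 𝓉 : Cube → 𝔽₂ be a 0-cochain with 𝓉(I₀) = 0 such that 𝓈(I,I') + 𝓈(gI,gI') = 𝓉(I) + 𝓉(I') for every edge (I,I'). Then for every vertex I of Cube one has 𝓉(I) + 𝓉(gI) + ⋯ + 𝓉(g^{m−1}I) = 0 in 𝔽₂. -/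
/-- Connectedness of the cube, as an induction principle: a property of `lo` that passes along
edges holds at every vertex. -/
theorem Cube.induction_isSucc {ι : Type*} [Fintype ι] {lo hi : ι → ℤ}
    {P : (ι → ℤ) → Prop} (h0 : P lo)
    (hstep : ∀ I I', I ∈ Cube lo hi → I' ∈ Cube lo hi → IsSucc I I' → P I → P I') :
    ∀ I, I ∈ Cube lo hi → P I := by
  classical
  -- Induct on the height of `I` above `lo`, lowering one coordinate at a time.
  have key : ∀ n : ℕ, ∀ I, I ∈ Cube lo hi → ∑ i, (I i - lo i) = n → P I := by
    intro n
    induction n with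
    | zero =>
      intro I hI hsum
      have hz := (Finset.sum_eq_zero_iff_of_nonneg
        (fun i _ => sub_nonneg.2 (hI i).1)).1 (by simpa using hsum)
      have hIlo : I = lo := funext fun i => sub_eq_zero.1 (hz i (Finset.mem_univ i))
      rwa [hIlo]
    | succ n ih =>
      intro I hI hsum
      obtain ⟨j, -, hj⟩ : ∃ j ∈ Finset.univ, 0 < I j - lo j := by
        apply Finset.exists_lt_of_sum_lt
        rw [hsum, Finset.sum_const_zero]
        positivity
      have hJ : Function.update I j (I j - 1) ∈ Cube lo hi := by
        intro i
        have hi' := hI i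
        rcases eq_or_ne i j with rfl | hij
        · rw [Function.update_self]
          omega
        · rwa [Function.update_of_ne hij]
      refine hstep _ I hJ hI ⟨j, by simp, fun k hk => by simp [hk]⟩ (ih _ hJ ?_)
      have hdiff : ∀ i, Function.update I j (I j - 1) i - lo i
          = (I i - lo i) - if i = j then 1 else 0 := by
        intro i
        rcases eq_or_ne i j with rfl | hij
        · simp only [Function.update_self, if_true]
          ring
        · simp [hij]
      simp only [hdiff]
      rw [Finset.sum_sub_distrib, hsum]
      simp
  intro I hI
  have hnn : 0 ≤ ∑ i, (I i - lo i) := Finset.sum_nonneg fun i _ => sub_nonneg.2 (hI i).1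
  exact key (∑ i, (I i - lo i)).toNat I hI (Int.toNat_of_nonneg hnn).symm

/-- The orbit sums of `t` at the two ends of an edge agree: their total telescopes to
`s I I' + s (g^[m] I) (g^[m] I')`, which is `0` in characteristic two. -/
theorem orbit_sum_eq_of_isSucc {ι : Type*} {lo hi : ι → ℤ} {m : ℕ}
    {g : (ι → ℤ) → (ι → ℤ)} (hgmaps : Set.MapsTo g (Cube lo hi) (Cube lo hi))
    (hgsucc : ∀ I I', I ∈ Cube lo hi → I' ∈ Cube lo hi → IsSucc I I' →
      IsSucc (g I) (g I'))
    (hgm : ∀ I, I ∈ Cube lo hi → g^[m] I = I)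
    {s : (ι → ℤ) → (ι → ℤ) → ZMod 2} {t : (ι → ℤ) → ZMod 2}
    (ht : ∀ I I', I ∈ Cube lo hi → I' ∈ Cube lo hi → IsSucc I I' →
      s I I' + s (g I) (g I') = t I + t I')
    {I I' : ι → ℤ} (hI : I ∈ Cube lo hi) (hI' : I' ∈ Cube lo hi) (h : IsSucc I I') :
    ∑ k ∈ Finset.range m, t (g^[k] I) = ∑ k ∈ Finset.range m, t (g^[k] I') := by
  have hedge : ∀ k, IsSucc (g^[k] I) (g^[k] I') := by
    intro k
    induction k with
    | zero => exact h
    | succ k ih =>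
      rw [Function.iterate_succ_apply', Function.iterate_succ_apply']
      exact hgsucc _ _ (hgmaps.iterate k hI) (hgmaps.iterate k hI') ih
  rw [← CharTwo.add_eq_zero, ← Finset.sum_add_distrib]
  calc ∑ k ∈ Finset.range m, (t (g^[k] I) + t (g^[k] I'))
      = ∑ k ∈ Finset.range m,
          (s (g^[k + 1] I) (g^[k + 1] I') - s (g^[k] I) (g^[k] I')) := by
        refine Finset.sum_congr rfl fun k _ => ?_
        rw [← ht _ _ (hgmaps.iterate k hI) (hgmaps.iterate k hI') (hedge k),
          Function.iterate_succ_apply', Function.iterate_succ_apply', CharTwo.sub_eq_add, add_comm]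
    _ = s (g^[m] I) (g^[m] I') - s (g^[0] I) (g^[0] I') :=
        Finset.sum_range_sub (fun k => s (g^[k] I) (g^[k] I')) m
    _ = 0 := by
        rw [hgm I hI, hgm I' hI']
        exact sub_self _

/-- Key step in constructing the `ℤ/m`-action on the Khovanov–Rozansky bracket of an
`m`-periodic diagram: if `g` is an edge-preserving bijection of the cube with
`g^m = id` fixing the minimal vertex `I₀ = lo`, `𝓈` is a sign assignment,
`𝓉` satisfies `𝓈(I,I') + 𝓈(gI,gI') = 𝓉(I) + 𝓉(I')` on edges and `𝓉(I₀) = 0`, then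
every orbit sum `𝓉(I) + 𝓉(gI) + ⋯ + 𝓉(g^{m−1}I)` vanishes. -/
theorem orbit_sum_vanishes {ι : Type*} [Fintype ι]
    (lo hi : ι → ℤ) (hlohi : ∀ i, lo i ≤ hi i) (m : ℕ) (hm : 1 ≤ m)
    (g : (ι → ℤ) → (ι → ℤ))
    (hgbij : Set.BijOn g (Cube lo hi) (Cube lo hi))
    (hgsucc : ∀ I I', I ∈ Cube lo hi → I' ∈ Cube lo hi → IsSucc I I' →
      IsSucc (g I) (g I'))
    (hgsucc' : ∀ I I', I ∈ Cube lo hi → I' ∈ Cube lo hi → IsSucc (g I) (g I') →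
      IsSucc I I')
    (hgm : ∀ I, I ∈ Cube lo hi → g^[m] I = I)
    (hgfix : g lo = lo)
    (s : (ι → ℤ) → (ι → ℤ) → ZMod 2) (hs : IsSignAssignment lo hi s)
    (t : (ι → ℤ) → ZMod 2) (ht0 : t lo = 0)
    (ht : ∀ I I', I ∈ Cube lo hi → I' ∈ Cube lo hi → IsSucc I I' →
      s I I' + s (g I) (g I') = t I + t I') :
    ∀ I, I ∈ Cube lo hi → ∑ k ∈ Finset.range m, t (g^[k] I) = 0 := by
  refine Cube.induction_isSucc ?_ fun I I' hI hI' h hsum => ?_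
  · simp [Function.iterate_fixed hgfix, ht0]
  · rw [← orbit_sum_eq_of_isSucc hgbij.mapsTo hgsucc hgm ht hI hI' h, hsum]
end

section
/- Let p be a prime, let u, s, ℓ be natural numbers with u ≤ ℓ and s ≤ ℓ, and let j be a natural number with j < p^s. Then the number of i ∈ {0, 1, …, p^ℓ − 1} satisfying gcd(i, p^ℓ) = p^u and i ≡ j (mod p^s) equals: φ(p^{ℓ−u}) if s ≤ u and j = 0; p^{ℓ−s} if u < s and gcd(j, p^s) = p^u; and 0 in all other cases. -/
/-!
Since `p ^ s ∣ p ^ ℓ`, one has `gcd (gcd (i, p ^ ℓ), p ^ s) = gcd (i, p ^ s)`.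

If `s ≤ u`, then `gcd (i, p ^ ℓ) = p ^ u` forces `p ^ s ∣ i`, so only the residue `j = 0` occurs, and
for it the congruence is automatic; the count is `φ (p ^ ℓ / p ^ u)` by `Nat.totient_div_of_dvd`.

If `u < s`, then `gcd (i, p ^ ℓ) = p ^ u` is equivalent to `gcd (i, p ^ s) = p ^ u`
(`gcd_pow_eq_pow_iff`), which depends only on the residue `j` of `i`; the count is therefore either
`0` or the size `p ^ (ℓ - s)` of a full residue class (`card_residue_class`).
-/

/-- Above the exponent `u`, the value `p ^ u` of the gcd with a power of `p` does not depend on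
which power is taken. -/
lemma gcd_pow_eq_pow_iff {p : ℕ} (hp : p.Prime) {u s ℓ : ℕ} (hus : u < s) (hs : s ≤ ℓ) (i : ℕ) :
    Nat.gcd i (p ^ ℓ) = p ^ u ↔ Nat.gcd i (p ^ s) = p ^ u := by
  have key : Nat.gcd (Nat.gcd i (p ^ ℓ)) (p ^ s) = Nat.gcd i (p ^ s) := by
    rw [Nat.gcd_assoc, Nat.gcd_eq_right (pow_dvd_pow p hs)]
  constructor
  · intro h
    rw [← key, h, Nat.gcd_eq_left (pow_dvd_pow p hus.le)]
  · intro h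
    obtain ⟨k, -, hk⟩ := (Nat.dvd_prime_pow hp).1 (Nat.gcd_dvd_right i (p ^ ℓ))
    rw [h, hk] at key
    rw [hk]
    -- The gcd of `p ^ k` and `p ^ s` is the smaller of the two, and it is not `p ^ s`.
    rcases le_total k s with hks | hks
    · rwa [Nat.gcd_eq_left (pow_dvd_pow p hks)] at key
    · rw [Nat.gcd_eq_right (pow_dvd_pow p hks)] at key
      exact absurd (Nat.pow_right_injective hp.two_le key) hus.ne'

lemma card_residue_class {m j : ℕ} (hj : j < m) (n : ℕ) :
    ((Finset.range (m * n)).filter (fun i => i % m = j)).card = n := by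
  have hm : 0 < m := by omega
  have himage : (Finset.range (m * n)).filter (fun i => i % m = j)
      = (Finset.range n).image (fun k => j + m * k) := by
    ext i
    simp only [Finset.mem_filter, Finset.mem_range, Finset.mem_image]
    constructor
    · rintro ⟨hi, rfl⟩
      exact ⟨i / m, Nat.div_lt_of_lt_mul hi, Nat.mod_add_div i m⟩
    · rintro ⟨k, hk, rfl⟩
      refine ⟨?_, by rw [Nat.add_mul_mod_self_left, Nat.mod_eq_of_lt hj]⟩
      have := Nat.mul_le_mul_left m (Nat.succ_le_of_lt hk)
      rw [Nat.mul_succ] at this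
      omega
  rw [himage, Finset.card_image_of_injective, Finset.card_range]
  intro a b hab
  exact Nat.eq_of_mul_eq_mul_left hm (Nat.add_left_cancel hab)


/-- Counting lemma for the restriction of the summand `ℂ[ℤ/p^ℓ]_{p^{ℓ−u}}` of the group
algebra to `ℤ/p^s`: the number of `i ∈ {0,…,p^ℓ − 1}` with `gcd(i, p^ℓ) = p^u` and
`i ≡ j (mod p^s)` equals `φ(p^{ℓ−u})` if `s ≤ u` and `j = 0`; equals `p^{ℓ−s}` if
`u < s` and `gcd(j, p^s) = p^u`; and equals `0` otherwise. -/
theorem count_gcd_pow_prime_residue (p : ℕ) (hp : p.Prime) (u s ℓ : ℕ)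
    (hu : u ≤ ℓ) (hs : s ≤ ℓ) (j : ℕ) (hj : j < p ^ s) :
    ((Finset.range (p ^ ℓ)).filter
        (fun i => Nat.gcd i (p ^ ℓ) = p ^ u ∧ i % p ^ s = j)).card =
      if s ≤ u ∧ j = 0 then Nat.totient (p ^ (ℓ - u))
      else if u < s ∧ Nat.gcd j (p ^ s) = p ^ u then p ^ (ℓ - s)
      else 0 := by
  rcases le_or_gt s u with hsu | hus
  · have hmod : ∀ i, Nat.gcd i (p ^ ℓ) = p ^ u → i % p ^ s = 0 := fun i hi =>
      Nat.mod_eq_zero_of_dvd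
        ((pow_dvd_pow p hsu).trans (hi ▸ Nat.gcd_dvd_left i (p ^ ℓ)))
    by_cases hj0 : j = 0
    · subst hj0
      rw [if_pos ⟨hsu, rfl⟩, ← Nat.pow_div hu hp.pos,
        Nat.totient_div_of_dvd (pow_dvd_pow p hu)]
      congr 1
      ext i
      simp only [Finset.mem_filter, Nat.gcd_comm (p ^ ℓ) i]
      exact and_congr_right fun _ => ⟨fun h => h.1, fun h => ⟨h, hmod i h⟩⟩
    · rw [if_neg (fun h => hj0 h.2), if_neg (fun h => hsu.not_gt h.1), Finset.card_eq_zero,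
        Finset.filter_eq_empty_iff]
      rintro i - ⟨hi, rfl⟩
      exact hj0 (hmod i hi)
  · rw [if_neg (fun h => hus.not_ge h.1)]
    have hgcd : ∀ i, i % p ^ s = j →
        (Nat.gcd i (p ^ ℓ) = p ^ u ↔ Nat.gcd j (p ^ s) = p ^ u) := by
      rintro i rfl
      rw [gcd_pow_eq_pow_iff hp hus hs, Nat.gcd_comm i, Nat.gcd_rec]
    by_cases hjg : Nat.gcd j (p ^ s) = p ^ u
    · rw [if_pos ⟨hus, hjg⟩]
      have hcard := card_residue_class hj (p ^ (ℓ - s))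
      rw [← pow_add, Nat.add_sub_cancel' hs] at hcard
      rw [← hcard]
      congr 1
      ext i
      simp only [Finset.mem_filter]
      exact and_congr_right fun _ => ⟨fun h => h.2, fun h => ⟨(hgcd i h).2 hjg, h⟩⟩
    · rw [if_neg (fun h => hjg h.2), Finset.card_eq_zero, Finset.filter_eq_empty_iff]
      rintro i - ⟨hi, hij⟩
      exact hjg ((hgcd i hij).1 hi)
end
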